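/- (Sign/Galois equivariance of Dirichlet L-values) For a primitive Dirichlet character χ and a positive integer k with χ(-1) = (-1)^k, and for any field automorphism σ of C, one has (L(k, χ) / ((πi)^k g(χ)))^σ = L(k, χ^σ) / ((πi)^k g(χ^σ)), where g(χ) = Σ_{a mod c} χ(a) e^{2πia/c} is the Gauss sum and χ^σ = σ ∘ χ. -/

import Mathlib

open scoped Real

section
open Complex HurwitzZeta Filter Topology Set MeasureTheory

lemma aux_re_pos {z : ℂ} (hz : ‖z‖ = 1) (hz1 : z ≠ 1) {t : ℝ} (ht : 0 ≤ t) :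
    0 < (1 - z * rexp (-t)).re := by
  have h1 : z.re < 1 := by
    rcases lt_or_eq_of_le (hz ▸ Complex.re_le_norm z) with h | h
    · exact h
    · exfalso
      apply hz1
      have h2 : z.re ^ 2 + z.im ^ 2 = 1 := by
        have := Complex.sq_norm z
        rw [hz, Complex.normSq_apply] at this
        nlinarith
      have : z.im = 0 := by
        rw [h] at h2
        nlinarith
      exact Complex.ext (by simpa using h) (by simpa using this)
  have h3 : rexp (-t) ≤ 1 := by simpa using ht
  have h4 := Real.exp_pos (-t)
  have : (z * (rexp (-t) : ℂ)).re = z.re * rexp (-t) := by simp [-ofReal_exp]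
  rw [Complex.sub_re, this, Complex.one_re]
  nlinarith

lemma expZeta_one_eq {x : ℝ} (hx : (x : UnitAddCircle) ≠ 0) (hz1 : cexp (2 * π * I * x) ≠ 1) :
    expZeta x 1 = - Complex.log (1 - cexp (2 * π * I * x)) := by
  set z := cexp (2 * π * I * x) with hz
  have hn : ‖z‖ = 1 := by
    rw [hz, show (2 * π * I * x : ℂ) = ((2 * π * x : ℝ) : ℂ) * I by push_cast; ring]
    exact Complex.norm_exp_ofReal_mul_I _
  let F : ℝ → ℂ := fun t => z * rexp (-t) / (1 - z * rexp (-t))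
  have hne : ∀ t : ℝ, 0 ≤ t → 1 - z * rexp (-t) ≠ 0 := fun t ht h => by
    have := aux_re_pos hn hz1 ht
    rw [h] at this; simp at this
  have hFc : ∀ t : ℝ, 0 ≤ t → ContinuousAt F t := fun t ht => by
    refine ContinuousAt.div ?_ ?_ (hne t ht) <;> fun_prop
  have hexp0 : Tendsto (fun t : ℝ => z * (rexp (-t) : ℂ)) atTop (𝓝 0) := by
    have : Tendsto (fun t : ℝ => ((rexp (-t) : ℝ) : ℂ)) atTop (𝓝 ((0 : ℝ) : ℂ)) :=
      (continuous_ofReal.tendsto 0).comp Real.tendsto_exp_neg_atTop_nhds_zero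
    simpa using this.const_mul z
  have hFloc : LocallyIntegrableOn F (Ioi 0) :=
    ContinuousOn.locallyIntegrableOn
      (fun t ht => (hFc t (le_of_lt ht)).continuousWithinAt) measurableSet_Ioi
  have hFtop : F =O[atTop] fun t => Real.exp (-1 * t) := by
    have h1 : Tendsto (fun t : ℝ => z / (1 - z * (rexp (-t) : ℂ))) atTop (𝓝 (z / (1 - 0))) :=
      tendsto_const_nhds.div (tendsto_const_nhds.sub hexp0) (by simp)
    have h2 := h1.isBigO_one ℝ
    have h3 : (fun t : ℝ => (rexp (-t) : ℂ)) =O[atTop] fun t => Real.exp (-1 * t) := by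
      refine Asymptotics.IsBigO.of_bound 1 (Eventually.of_forall fun t => ?_)
      simp [-ofReal_exp]
    have := h2.mul h3
    refine this.congr (fun t => ?_) (fun t => by simp)
    simp only [F]; ring
  have hFbot : F =O[𝓝[>] 0] (fun t : ℝ => t ^ (-(0:ℝ))) := by
    have h1 : Tendsto F (𝓝[>] 0) (𝓝 (F 0)) := (hFc 0 le_rfl).tendsto.mono_left nhdsWithin_le_nhds
    have := h1.isBigO_one ℝ
    simpa using this
  have hdiff : DifferentiableAt ℂ (mellin F) 1 :=
    mellin_differentiableAt_of_isBigO_rpow_exp one_pos hFloc hFtop hFbot (by simp)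
  have hconv : MellinConvergent F 1 :=
    mellinConvergent_of_isBigO_rpow_exp one_pos hFloc hFtop hFbot (by simp)
  have hint : IntegrableOn F (Ioi 0) := by
    simpa [MellinConvergent] using hconv
  have hmel1 : mellin F 1 = - Complex.log (1 - z) := by
    have h1 : mellin F 1 = ∫ t in Ioi (0:ℝ), F t := by simp [mellin]
    rw [h1, integral_Ioi_of_hasDerivAt_of_tendsto' (f := fun t : ℝ => Complex.log (1 - z * rexp (-t)))
      (m := 0) ?_ hint ?_]
    · simp
    · intro t ht
      have hs : (1 - z * rexp (-t)) ∈ slitPlane := Or.inl (aux_re_pos hn hz1 ht)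
      have hd : HasDerivAt (fun t : ℝ => 1 - z * (rexp (-t) : ℂ)) (z * rexp (-t)) t := by
        have : HasDerivAt (fun t : ℝ => rexp (-t)) (-rexp (-t)) t := by
          simpa using (hasDerivAt_neg t).exp
        have := (this.ofReal_comp.const_mul z).const_sub 1
        simpa [-ofReal_exp] using this
      exact hd.clog_real hs
    · have h2 : Tendsto (fun t : ℝ => 1 - z * (rexp (-t) : ℂ)) atTop (𝓝 1) := by
        simpa using hexp0.const_sub 1
      have := h2.clog (by simp)
      simpa using this
  have hmel : ∀ s : ℂ, 1 < s.re → mellin F s = Gamma s * expZeta x s := by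
    intro s hs
    have hs0 : s ≠ 0 := by rintro rfl; simp at hs; linarith
    have hA : HasSum (fun i : ℕ ↦ Gamma s * z ^ (i+1) / ((i + 1 : ℕ) : ℝ) ^ s) (mellin F s) := by
      refine hasSum_mellin (a := fun i : ℕ => z ^ (i+1)) (p := fun i : ℕ => ((i+1 : ℕ) : ℝ))
        (fun i => Or.inr (by positivity)) (by linarith) ?_ ?_
      · intro t ht
        have hw : ‖z * rexp (-t)‖ < 1 := by
          simpa [hn, -ofReal_exp] using ht
        have := (hasSum_geometric_of_norm_lt_one hw).mul_left (z * rexp (-t))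
        convert! this using 1
        ext i
        have : rexp (-((i+1 : ℕ) : ℝ) * t) = rexp (-t) ^ (i+1) := by
          rw [← Real.exp_nat_mul]; congr 1; ring
        rw [this]; push_cast; ring
      · have := (Real.summable_one_div_nat_rpow.mpr hs)
        have := (summable_nat_add_iff 1).mpr this
        simpa [hn] using this
    have hB := (hasSum_expZeta_of_one_lt_re x hs)
    have hB' := ((hasSum_nat_add_iff' 1).mpr hB).mul_left (Gamma s)
    have hC : (fun i : ℕ ↦ Gamma s * z ^ (i+1) / ((i + 1 : ℕ) : ℝ) ^ s) =
      fun i : ℕ => Gamma s * (cexp (2 * π * I * x * ((i + 1 : ℕ) : ℂ)) / ((i + 1 : ℕ) : ℂ) ^ s) := by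
      ext i
      rw [hz, ← Complex.exp_nat_mul, mul_div_assoc, mul_comm (2 * π * I * x : ℂ)]
      push_cast; rfl
    rw [hC] at hA
    rw [hA.unique hB']
    simp [hs0]
  have hu : Tendsto (fun n : ℕ => (1 + 1 / ((n : ℂ) + 1))) atTop (𝓝 1) := by
    simpa using (tendsto_one_div_add_atTop_nhds_zero_nat (𝕜 := ℂ)).const_add 1
  have h1 := hdiff.continuousAt.tendsto.comp hu
  have hG : DifferentiableAt ℂ (fun s => Gamma s * expZeta x s) 1 :=
    (differentiableAt_Gamma_one).mul (differentiableAt_expZeta _ _ (Or.inr hx))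
  have h2 := hG.continuousAt.tendsto.comp hu
  have h3 : (mellin F ∘ fun n : ℕ => (1 + 1 / ((n : ℂ) + 1))) =
     (fun s => Gamma s * expZeta x s) ∘ fun n : ℕ => (1 + 1 / ((n : ℂ) + 1)) := by
    ext n
    refine hmel _ ?_
    beta_reduce
    have : (1 + 1 / ((n : ℂ) + 1)) = ((1 + 1 / ((n:ℝ) + 1) : ℝ) : ℂ) := by push_cast; ring
    rw [this, ofReal_re]
    have : 0 < 1 / ((n:ℝ) + 1) := by positivity
    linarith
  rw [h3] at h1
  have := tendsto_nhds_unique h1 h2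
  rw [hmel1] at this
  simpa using this.symm

lemma sinZeta_one_eq {x : ℝ} (hx0 : 0 < x) (hx1 : x < 1) :
    sinZeta x 1 = π * (1 / 2 - x) := by
  have hsin : 0 < Real.sin (π * x) := Real.sin_pos_of_pos_of_lt_pi (by positivity)
    (by nlinarith [Real.pi_pos])
  have key : ∀ y : ℝ, 1 - cexp (2 * π * I * y) =
      ((2 * Real.sin (π * y) : ℝ) : ℂ) *
        (Complex.cos ((π * y - π / 2 : ℝ) : ℂ) + Complex.sin ((π * y - π / 2 : ℝ) : ℂ) * I) := by
    intro y
    push_cast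
    rw [Complex.cos_sub_pi_div_two, Complex.sin_sub_pi_div_two,
      show (2 * π * I * y : ℂ) = (2 * (π * y)) * I by ring, Complex.exp_mul_I, 
      Complex.cos_two_mul, Complex.sin_two_mul]
    have := Complex.sin_sq_add_cos_sq (π * y : ℂ)
    linear_combination (-2 : ℂ) * this
  have hz1 : cexp (2 * π * I * x) ≠ 1 := by
    intro h
    have h0 := key x
    rw [h, sub_self] at h0
    have := congrArg norm h0
    rw [norm_mul, ← Complex.exp_mul_I, Complex.norm_exp_ofReal_mul_I, norm_zero, mul_one, norm_real] at this
    have := (norm_eq_zero.mp this.symm)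
    linarith
  have hz2 : cexp (2 * π * I * (-x : ℝ)) ≠ 1 := by
    intro h
    apply hz1
    have : cexp (2 * π * I * x) = (cexp (2 * π * I * (-x : ℝ)))⁻¹ := by
      rw [← Complex.exp_neg]; congr 1; push_cast; ring
    rw [this, h, inv_one]
  have hxc : (x : UnitAddCircle) ≠ 0 := by
    intro h
    obtain ⟨m, hm⟩ := (AddCircle.coe_eq_zero_iff (1:ℝ)).mp h
    simp at hm
    rw [← hm] at hx0 hx1
    have h1 : (0:ℤ) < m := by exact_mod_cast hx0
    have h2 : m < (1:ℤ) := by exact_mod_cast hx1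
    omega
  have e1 := expZeta_one_eq hxc hz1
  have e2 := expZeta_one_eq (x := -x) (by simpa using hxc) hz2
  rw [sinZeta_eq, ← AddCircle.coe_neg, e1, e2, key, key]
  have a1 : ((2 * Real.sin (π * -x) : ℝ) : ℂ) *
        (Complex.cos ((π * -x - π / 2 : ℝ) : ℂ) + Complex.sin ((π * -x - π / 2 : ℝ) : ℂ) * I)
       = ((2 * Real.sin (π * x) : ℝ) : ℂ) *
        (Complex.cos ((π / 2 - π * x : ℝ) : ℂ) + Complex.sin ((π / 2 - π * x : ℝ) : ℂ) * I) := by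
    have : (π * -x - π / 2 : ℝ) = (π / 2 - π * x) - π := by ring
    rw [this, mul_neg, Real.sin_neg, ofReal_sub _ π, Complex.cos_sub_pi, Complex.sin_sub_pi]
    push_cast; ring
  rw [a1]
  have lg : ∀ θ : ℝ, θ ∈ Ioc (-π) π → Complex.log (((2 * Real.sin (π * x) : ℝ) : ℂ) *
        (Complex.cos (θ : ℂ) + Complex.sin (θ : ℂ) * I)) = Real.log (2 * Real.sin (π * x)) + θ * I := by
    intro θ hθ
    rw [Complex.log, Complex.arg_mul_cos_add_sin_mul_I (by positivity) hθ, norm_mul,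
      ← Complex.exp_mul_I, Complex.norm_exp_ofReal_mul_I, mul_one, norm_real, Real.norm_of_nonneg (by positivity)]
  rw [lg _ ⟨by nlinarith [Real.pi_pos], by nlinarith [Real.pi_pos]⟩,
    lg _ ⟨by nlinarith [Real.pi_pos], by nlinarith [Real.pi_pos]⟩]
  push_cast
  field_simp
  ring
lemma bern_eval_cast (m : ℕ) (r : ℚ) :
    ((Polynomial.bernoulli m).map (algebraMap ℚ ℂ)).eval (r : ℂ)
      = (((Polynomial.bernoulli m).eval r : ℚ) : ℂ) := by
  have := Polynomial.eval₂_at_apply (algebraMap ℚ ℂ) r (p := Polynomial.bernoulli m)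
  rw [Polynomial.eval_map]
  simpa using this

lemma val_div_mem (n : ℕ) [NeZero n] (j : ZMod n) : ((j.val / n : ℝ)) ∈ Icc (0:ℝ) 1 := by
  have h0 : (0:ℝ) < n := by exact_mod_cast Nat.pos_of_ne_zero (NeZero.ne n)
  have h : (j.val : ℝ) < n := by exact_mod_cast ZMod.val_lt j
  exact ⟨by positivity, (div_le_one h0).mpr h.le⟩

lemma cosZeta_rat (n : ℕ) [NeZero n] (m : ℕ) (hm : m ≠ 0) (j : ZMod n) :
    ∃ q : ℚ, cosZeta (ZMod.toAddCircle j) (2 * m) = ((π : ℂ) * I) ^ (2 * m) * q := by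
  refine ⟨-(2 ^ (2 * m) / 2 / (2 * m).factorial) *
    (Polynomial.bernoulli (2 * m)).eval (j.val / n : ℚ), ?_⟩
  rw [ZMod.toAddCircle_apply, cosZeta_two_mul_nat hm (val_div_mem n j)]
  have := bern_eval_cast (2 * m) (j.val / n : ℚ)
  push_cast at this ⊢
  rw [this, mul_pow _ I, mul_pow 2, pow_mul I, I_sq]
  ring

lemma sinZeta_rat (n : ℕ) [NeZero n] (m : ℕ) (j : ZMod n) :
    ∃ q : ℚ, I * sinZeta (ZMod.toAddCircle j) (2 * m + 1) = ((π : ℂ) * I) ^ (2 * m + 1) * q := by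
  rcases eq_or_ne m 0 with rfl | hm
  · rcases eq_or_ne j 0 with rfl | hj
    · refine ⟨0, ?_⟩
      have : sinZeta (0 : UnitAddCircle) 1 = 0 := by
        have := sinZeta_neg (0 : UnitAddCircle) 1
        rw [neg_zero] at this
        exact self_eq_neg.mp this
      simp [this]
    · refine ⟨1 / 2 - j.val / n, ?_⟩
      have h0 : (0:ℝ) < n := by exact_mod_cast Nat.pos_of_ne_zero (NeZero.ne n)
      have h : (j.val : ℝ) < n := by exact_mod_cast ZMod.val_lt j
      have hj' : (0 : ℝ) < j.val := by
        exact_mod_cast Nat.pos_of_ne_zero (by simpa [ZMod.val_eq_zero] using hj)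
      have := sinZeta_one_eq (x := j.val / n) (by positivity) ((div_lt_one h0).mpr h)
      rw [ZMod.toAddCircle_apply]
      simp only [Nat.cast_zero, mul_zero, zero_add, pow_one]
      rw [this]
      push_cast
      ring
  · refine ⟨-(2 ^ (2 * m + 1) / 2 / (2 * m + 1).factorial) *
      (Polynomial.bernoulli (2 * m + 1)).eval (j.val / n : ℚ), ?_⟩
    rw [ZMod.toAddCircle_apply, sinZeta_two_mul_nat_add_one hm (val_div_mem n j)]
    have := bern_eval_cast (2 * m + 1) (j.val / n : ℚ)
    push_cast at this ⊢
    rw [this, mul_pow _ I, mul_pow 2, pow_succ I, pow_mul I, I_sq]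
    ring

lemma sum_expZeta_rat (n : ℕ) [NeZero n] (k : ℕ) (hk : 1 ≤ k) :
    ∃ q : ZMod n → ℚ, ∀ ψ : DirichletCharacter ℂ n, ψ (-1) = (-1) ^ k →
      ∑ j : ZMod n, ψ j * expZeta (ZMod.toAddCircle (-j)) k
        = ((π : ℂ) * I) ^ k * ∑ j, ψ j * q j := by
  rcases Nat.even_or_odd' k with ⟨m, rfl | rfl⟩
  · choose q hq using cosZeta_rat n m (by omega)
    refine ⟨q, fun ψ hψ => ?_⟩
    have hev : Function.Even ψ := fun x => by
      rw [← neg_one_mul, map_mul, hψ]; simp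
    have h0 : ∑ j : ZMod n, ψ j * sinZeta (ZMod.toAddCircle j) (2 * m) = 0 := by
      refine (hev.mul_odd fun j ↦ ?_).sum_eq_zero
      rw [map_neg, sinZeta_neg]
    have : ∀ j : ZMod n, ψ j * expZeta (ZMod.toAddCircle (-j)) ((2 * m : ℕ) : ℂ) =
       ψ j * (((π : ℂ) * I) ^ (2 * m) * q j) - I * (ψ j * sinZeta (ZMod.toAddCircle j) (2 * m)) := by
      intro j
      rw [← hq, expZeta, map_neg, cosZeta_neg, sinZeta_neg]; push_cast; ring
    simp_rw [this]
    rw [Finset.sum_sub_distrib, ← Finset.mul_sum, h0, Finset.mul_sum]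
    simp only [mul_zero, sub_zero]
    exact Finset.sum_congr rfl fun j _ => by ring
  · choose q hq using sinZeta_rat n m
    refine ⟨fun j => - q j, fun ψ hψ => ?_⟩
    have hev : Function.Odd ψ := fun x => by
      rw [← neg_one_mul, map_mul, hψ]; simp [pow_succ]
    have h0 : ∑ j : ZMod n, ψ j * cosZeta (ZMod.toAddCircle j) (2 * m + 1) = 0 := by
      refine (hev.mul_even fun j ↦ ?_).sum_eq_zero
      rw [map_neg, cosZeta_neg]
    have : ∀ j : ZMod n, ψ j * expZeta (ZMod.toAddCircle (-j)) ((2 * m + 1 : ℕ) : ℂ) =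
       ψ j * cosZeta (ZMod.toAddCircle j) (2 * m + 1) - ψ j * (((π : ℂ) * I) ^ (2 * m + 1) * q j) := by
      intro j
      rw [← hq, expZeta, map_neg, cosZeta_neg, sinZeta_neg]; push_cast; ring
    simp_rw [this]
    rw [Finset.sum_sub_distrib, h0, Finset.mul_sum, zero_sub, ← Finset.sum_neg_distrib]
    exact Finset.sum_congr rfl fun j _ => by push_cast; ring

open ZMod DirichletCharacter in
lemma L_value_formula (n : ℕ) [NeZero n] (k : ℕ) (hk : 1 ≤ k) :
    ∃ q : ZMod n → ℚ, ∀ χ : DirichletCharacter ℂ n, χ.IsPrimitive → χ (-1) = (-1) ^ k →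
      DirichletCharacter.LFunction χ (k : ℂ) / (((π : ℂ) * I) ^ k * gaussSum χ stdAddChar)
        = ∑ j, χ⁻¹ j * q j := by
  obtain ⟨q, hq⟩ := sum_expZeta_rat n k hk
  refine ⟨fun j => q j / n, fun χ hχ hpar => ?_⟩
  have hn : (n : ℂ) ≠ 0 := NeZero.ne _
  have hχ' : (χ⁻¹).IsPrimitive := by
    rw [isPrimitive_def, conductor_inv]; exact hχ
  have hpar' : χ⁻¹ (-1) = (-1) ^ k := by
    rw [MulChar.inv_apply_eq_inv', hpar, ← inv_pow, inv_neg, inv_one]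
  have hneg : ∀ x, χ (-x) = (-1) ^ k * χ x := fun x => by
    rw [← neg_one_mul, map_mul, hpar]
  have hneg' : ∀ x, χ⁻¹ (-x) = (-1) ^ k * χ⁻¹ x := fun x => by
    rw [← neg_one_mul, map_mul, hpar']
  have hF : 𝓕 (χ : ZMod n → ℂ) = fun x => ((-1) ^ k * gaussSum χ stdAddChar) * χ⁻¹ x := by
    ext x
    rw [hχ.fourierTransform_eq_inv_mul_gaussSum, hneg']; ring
  have hF' : 𝓕 (⇑(χ⁻¹)) = fun x => ((-1) ^ k * gaussSum χ⁻¹ stdAddChar) * χ x := by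
    ext x
    rw [hχ'.fourierTransform_eq_inv_mul_gaussSum, inv_inv, hneg]; ring
  have hgg : (-1) ^ k * gaussSum χ stdAddChar * gaussSum χ⁻¹ stdAddChar = n := by
    have h := congrFun (dft_dft (χ : ZMod n → ℂ)) (-1)
    rw [hF, dft_const_mul, hF'] at h
    simp only [hpar, neg_neg, map_one, smul_eq_mul, mul_one] at h
    have h2 : ((-1 : ℂ) ^ k) * (-1) ^ k = 1 := by rw [← mul_pow]; simp
    linear_combination h - (-1) ^ k * gaussSum χ stdAddChar * gaussSum χ⁻¹ stdAddChar * h2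
  have hL := ZMod.LFunction_dft (⇑(χ⁻¹)) (s := k) (by
    by_cases h : k = 1
    · left
      subst h
      have := hneg' 0
      rw [neg_zero] at this
      exact self_eq_neg.mp (by simpa using this)
    · right; exact_mod_cast h)
  rw [hF', hq _ hpar'] at hL
  have hg : gaussSum χ stdAddChar ≠ 0 := by
    intro h
    rw [h] at hgg
    simp at hgg
    exact hn hgg.symm
  have hpi : ((π : ℂ) * I) ^ k ≠ 0 := by simp [Real.pi_ne_zero]
  rw [div_eq_iff (mul_ne_zero hpi hg)]
  have hs : ∑ j, χ⁻¹ j * ((q j / n : ℚ) : ℂ) = (∑ j, χ⁻¹ j * (q j : ℂ)) / n := by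
    rw [Finset.sum_div]
    exact Finset.sum_congr rfl fun j _ => by push_cast; ring
  rw [hs, ← mul_right_inj' hn]
  have hL2 : (-1) ^ k * gaussSum χ⁻¹ stdAddChar * DirichletCharacter.LFunction χ k
     = (↑π * I) ^ k * ∑ j, χ⁻¹ j * (q j : ℂ) := by
    rw [← hL, DirichletCharacter.LFunction, ZMod.LFunction, ZMod.LFunction, Finset.mul_sum,
      Finset.mul_sum, Finset.mul_sum]
    exact Finset.sum_congr rfl fun j _ => by ring
  rw [show (n : ℂ) * ((∑ j, χ⁻¹ j * (q j : ℂ)) / n * ((↑π * I) ^ k * gaussSum χ stdAddChar))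
    = gaussSum χ stdAddChar * ((↑π * I) ^ k * ∑ j, χ⁻¹ j * (q j : ℂ)) by field_simp, ← hL2]
  rw [← hgg]; ring

lemma ringHomComp_primitive {n : ℕ} [NeZero n] {χ : DirichletCharacter ℂ n} (hχ : χ.IsPrimitive)
    (σ : ℂ ≃+* ℂ) : DirichletCharacter.IsPrimitive (χ.ringHomComp σ.toRingHom) := by
  have : DirichletCharacter.conductorSet (χ.ringHomComp σ.toRingHom) = χ.conductorSet := by
    ext d
    simp only [DirichletCharacter.mem_conductorSet_iff]
    by_cases hd : d ∣ n
    · rw [DirichletCharacter.factorsThrough_iff_ker_unitsMap hd,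
        DirichletCharacter.factorsThrough_iff_ker_unitsMap hd]
      have : (MulChar.toUnitHom (χ.ringHomComp σ.toRingHom)).ker = χ.toUnitHom.ker := by
        ext u
        simp only [MonoidHom.mem_ker, Units.ext_iff, MulChar.coe_toUnitHom, Units.val_one,
          MulChar.ringHomComp_apply]
        exact σ.map_eq_one_iff
      rw [this]
    · exact ⟨fun h => absurd h.dvd hd, fun h => absurd h.dvd hd⟩
  rw [DirichletCharacter.isPrimitive_def, DirichletCharacter.conductor, this]
  exact hχ

end

/-- **Galois equivariance of Dirichlet L-values.** For a primitive
Dirichlet character `χ` and a positive integer `k` with `χ(-1) = (-1)^k`, and any field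
automorphism `σ` of `ℂ`, one has
`σ(L(k,χ)/((πi)^k g(χ))) = L(k,χ^σ)/((πi)^k g(χ^σ))`, where
`g(χ) = Σ_{a mod n} χ(a) e^{2πia/n}` is the Gauss sum and `χ^σ = σ ∘ χ`. -/
theorem stmt14 (n : ℕ) [NeZero n] (χ : DirichletCharacter ℂ n) (hχ : χ.IsPrimitive)
    (k : ℕ) (hk : 1 ≤ k) (hpar : χ (-1) = (-1) ^ k) (σ : ℂ ≃+* ℂ)
    (g : DirichletCharacter ℂ n → ℂ)
    (hg : ∀ ψ : DirichletCharacter ℂ n,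
      g ψ = ∑ a : ZMod n, ψ a * Complex.exp (2 * π * Complex.I * (a.val : ℂ) / (n : ℂ))) :
    σ (DirichletCharacter.LFunction χ (k : ℂ) / (((π : ℂ) * Complex.I) ^ k * g χ))
      = DirichletCharacter.LFunction (χ.ringHomComp σ.toRingHom) (k : ℂ)
          / (((π : ℂ) * Complex.I) ^ k * g (χ.ringHomComp σ.toRingHom)) := by
  have hg' : ∀ ψ : DirichletCharacter ℂ n, g ψ = gaussSum ψ ZMod.stdAddChar := by
    intro ψ
    rw [hg, gaussSum]
    refine Finset.sum_congr rfl fun a _ => ?_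
    rw [ZMod.stdAddChar_apply, ZMod.toCircle_apply]
  obtain ⟨q, hq⟩ := L_value_formula n k hk
  have hpar' : (χ.ringHomComp σ.toRingHom) (-1) = (-1) ^ k := by
    rw [MulChar.ringHomComp_apply, hpar]; simp
  rw [hg', hg', hq χ hχ hpar, hq _ (ringHomComp_primitive hχ σ) hpar', map_sum]
  refine Finset.sum_congr rfl fun j _ => ?_
  rw [map_mul, map_ratCast, MulChar.inv_apply_eq_inv', MulChar.inv_apply_eq_inv', map_inv₀]
  rfl
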